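/- Let I be a finite index set with |I| ≥ 2, let 𝒜 = (A_i)_{i∈I} be a uniformly hyperbolic family in SL₂(ℝ), and let p = (p_i)_{i∈I} be a nondegenerate probability vector. Then for every q > 1, liminf_{m→∞} (−(1/m)·log Σ_{i∈Ω_m} p_i^q) = τ̃(q). -/

import Mathlib

/-!
Put `t = τ̃(q)` and `f(w) = p_w^q ‖A_w‖^(2t)`. A stopping word `w ∈ Ω_m` satisfies
`2^m ≤ ‖A_w‖² ≤ const · 2^m`, so `Σ_{Ω_m} p_w^q` equals `2^(-mt) Σ_{Ω_m} f(w)` up to a constant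
(`stopSum_two_sided`), and it suffices that `F_m = Σ_{Ω_m} f(w)` is subexponential in `m`.
Submultiplicativity of the norm gives `f(uv) ≤ f(u) f(v)`, and the level sums
`Z_n = Σ_{|w| = n} f(w)` are subexponential because the pressure vanishes at `t`
(`levelSum_subexp`).

By uniform hyperbolicity every word of length `L = K (m + 1)` has a prefix in `Ω_m`, and no
word of `Ω_m` is longer than `L`. The second fact gives `F_m ≤ Σ_{n ≤ L} Z_n`
(`stopSumF_le`). The first one, splitting words of length `L` at a prefix in `Ω_m`, gives
`Z_L ≤ F_m · max_{n ≤ L} Z_n` (`levelSum_le_stopSumF`), which is the lower bound. Only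
submultiplicativity is needed, not the quasi-multiplicativity of norms in hyperbolic families.
-/


open MeasureTheory Filter Set Topology

namespace Paper

noncomputable section

abbrev Mat2 : Type := Matrix (Fin 2) (Fin 2) ℝ
abbrev SL2 : Type := Matrix.SpecialLinearGroup (Fin 2) ℝ

/-- The operator norm on 2×2 real matrices induced by the Euclidean norm on ℝ². -/
def opNorm (M : Mat2) : ℝ := ‖(Matrix.toEuclideanLin M).toContinuousLinearMap‖

/-- The product `A_{i₁} ⋯ A_{i_n}` of the matrices along a word `w = (i₁, …, i_n)`. -/
def wordProd {ι : Type*} (A : ι → SL2) (w : List ι) : SL2 := (w.map A).prod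

/-- The product `p_{i₁} ⋯ p_{i_n}` of the weights along a word `w = (i₁, …, i_n)`. -/
def wordWeight {ι : Type*} (p : ι → ℝ) (w : List ι) : ℝ := (w.map p).prod

/-- A finite family in SL₂(ℝ) is uniformly hyperbolic if `‖A_i‖ ≥ c rⁿ` for all words of
length `n ≥ 1`. -/
def UniformlyHyperbolic {ι : Type*} (A : ι → SL2) : Prop :=
  ∃ c > (0:ℝ), ∃ r > (1:ℝ), ∀ w : List ι, w ≠ [] →
    c * r ^ w.length ≤ opNorm (wordProd A w : Mat2)

/-- Strongly Diophantine: distinct words of the same length give matrices that are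
exponentially separated. -/
def StronglyDiophantine {ι : Type*} (A : ι → SL2) : Prop :=
  ∃ c ∈ Set.Ioo (0:ℝ) 1, ∀ w w' : List ι, w ≠ [] → w.length = w'.length → w ≠ w' →
    c ^ w.length ≤ opNorm ((wordProd A w : Mat2) - (wordProd A w' : Mat2))

/-- The real projective line. -/
abbrev RP1 : Type := Projectivization ℝ (Fin 2 → ℝ)

lemma cos_sin_ne_zero (θ : ℝ) : ![Real.cos θ, Real.sin θ] ≠ 0 := by
  intro h
  have h0 : Real.cos θ = 0 := by simpa using congrFun h 0
  have h1 : Real.sin θ = 0 := by simpa using congrFun h 1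
  have h2 := Real.sin_sq_add_cos_sq θ
  rw [h0, h1] at h2
  norm_num at h2

/-- The point of ℝP¹ in the direction of angle `θ`. -/
def dir (θ : ℝ) : RP1 := Projectivization.mk ℝ ![Real.cos θ, Real.sin θ] (cos_sin_ne_zero θ)

/-- The quotient topology on ℝP¹ (expressed through the angle parametrization). -/
instance : TopologicalSpace RP1 := TopologicalSpace.coinduced dir inferInstance

/-- The Borel σ-algebra on ℝP¹. -/
instance : MeasurableSpace RP1 := borel RP1

/-- The natural action of `A ∈ SL₂(ℝ)` on ℝP¹, `A·[v] = [Av]`. -/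
def pact (A : SL2) : RP1 → RP1 :=
  Projectivization.map (Matrix.SpecialLinearGroup.toLin' A).toLinearMap
    (Matrix.SpecialLinearGroup.toLin' A).injective

/-- `K` is the attractor of the family `A`: the (unique) nonempty compact set with
`K = ⋃ᵢ Aᵢ·K`. -/
def IsAttractor {ι : Type*} [Fintype ι] (A : ι → SL2) (K : Set RP1) : Prop :=
  K.Nonempty ∧ IsCompact K ∧ K = ⋃ i : ι, pact (A i) '' K

/-- `ν` is stationary for the family `A` with weights `p`: `ν = Σ_i p_i (A_i)_* ν`. -/
def IsStationary {ι : Type*} [Fintype ι] (A : ι → SL2) (p : ι → ℝ) (ν : Measure RP1) : Prop :=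
  ν = ∑ i : ι, ENNReal.ofReal (p i) • Measure.map (pact (A i)) ν

/-- The `k`-th arc of the `2^{-m}` dyadic partition of ℝP¹. -/
def dyadic (m k : ℕ) : Set RP1 :=
  dir '' Set.Ico (Real.pi * k / 2 ^ m) (Real.pi * (k + 1) / 2 ^ m)

/-- The concentric doubled arc `2I` of the `k`-th arc of the `2^{-m}` dyadic partition. -/
def dyadic2 (m k : ℕ) : Set RP1 :=
  dir '' Set.Ico (Real.pi * ((k : ℝ) - 1 / 2) / 2 ^ m) (Real.pi * ((k : ℝ) + 3 / 2) / 2 ^ m)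

/-- `Σ_{I ∈ 𝒟_m} ν(I)^q`. -/
def lqSum (ν : Measure RP1) (q : ℝ) (m : ℕ) : ℝ :=
  ∑ k ∈ Finset.range (2 ^ m), ((ν (dyadic m k)).toReal) ^ q

/-- The L^q spectrum `τ(ν,q) = liminf_m −(1/m) log₂ Σ_{I∈𝒟_m} ν(I)^q`. -/
def lqSpectrum (ν : Measure RP1) (q : ℝ) : ℝ :=
  Filter.liminf (fun m : ℕ => -(1 / (m : ℝ)) * Real.logb 2 (lqSum ν q m)) Filter.atTop

/-- `(1/n) log₂ Σ_{i ∈ Iⁿ} p_i^q ‖A_i‖^{2s}`, the `n`-th approximant of the pressure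
`Ψ_q(s)`. -/
def psiAvg {ι : Type*} [Fintype ι] (A : ι → SL2) (p : ι → ℝ) (q s : ℝ) (n : ℕ) : ℝ :=
  (1 / (n : ℝ)) * Real.logb 2
    (∑ w : Fin n → ι,
      (wordWeight p (List.ofFn w)) ^ q * (opNorm (wordProd A (List.ofFn w) : Mat2)) ^ (2 * s))

/-- `t = τ̃(q)`: `t` is the unique positive zero of the pressure function `Ψ_q`. -/
def IsPressureZero {ι : Type*} [Fintype ι] (A : ι → SL2) (p : ι → ℝ) (q t : ℝ) : Prop :=
  0 < t ∧
  Filter.Tendsto (fun n => psiAvg A p q t n) Filter.atTop (nhds 0) ∧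
  ∀ s : ℝ, 0 < s → Filter.Tendsto (fun n => psiAvg A p q s n) Filter.atTop (nhds 0) → s = t

/-- The angle metric on ℝP¹: `d([v],[w]) = arccos(|⟨v,w⟩| / (‖v‖ ‖w‖))`. -/
def pdist (x y : RP1) : ℝ :=
  Real.arccos (|x.rep 0 * y.rep 0 + x.rep 1 * y.rep 1| /
    (Real.sqrt (x.rep 0 ^ 2 + x.rep 1 ^ 2) * Real.sqrt (y.rep 0 ^ 2 + y.rep 1 ^ 2)))

/-- The open ball in ℝP¹ of radius `r` and center `x`. -/
def pball (x : RP1) (r : ℝ) : Set RP1 := {y | pdist x y < r}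

instance : Fact (0 < Real.pi) := ⟨Real.pi_pos⟩

/-- The angle coordinate `Θ : ℝP¹ → ℝ/πℤ`. -/
def theta (x : RP1) : AddCircle Real.pi :=
  ((Complex.arg ((x.rep 0 : ℂ) + (x.rep 1 : ℂ) * Complex.I) : ℝ) : AddCircle Real.pi)

/-- `w` is a `2^m` stopping word for the family `A`. -/
def IsStopping {ι : Type*} (A : ι → SL2) (m : ℕ) (w : List ι) : Prop :=
  w ≠ [] ∧
  (∀ j : ℕ, 1 ≤ j → j < w.length → opNorm (wordProd A (w.take j) : Mat2) ^ 2 < (2:ℝ) ^ m) ∧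
  (2 : ℝ) ^ m ≤ opNorm (wordProd A w : Mat2) ^ 2

/-- `Σ_{i ∈ Ω_m} p_i^q`, the `L^q` sum over the `2^m` stopping words. -/
def stopSum {ι : Type*} [Fintype ι] (A : ι → SL2) (p : ι → ℝ) (q : ℝ) (m : ℕ) : ℝ :=
  ∑' w : List ι,
    Set.indicator {w : List ι | IsStopping A m w} (fun w => (wordWeight p w) ^ q) w

/-- `Σ_{J ∈ 𝒟_{s+m}(I)} ν(J)^q` for `I` the `k`-th arc of `𝒟_s`. -/
def localSum (ν : Measure RP1) (q : ℝ) (s m k : ℕ) : ℝ :=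
  ∑ j ∈ Finset.range (2 ^ (s + m)),
    Set.indicator {j : ℕ | (dyadic (s + m) j ∩ dyadic s k).Nonempty}
      (fun j => (ν (dyadic (s + m) j)).toReal ^ q) j


/-! ### The operator norm and submultiplicative potentials -/

lemma opNorm_mul_le (M N : Mat2) : opNorm (M * N) ≤ opNorm M * opNorm N := by
  have h : (Matrix.toEuclideanLin (M * N)).toContinuousLinearMap
      = (Matrix.toEuclideanLin M).toContinuousLinearMap ∘L
        (Matrix.toEuclideanLin N).toContinuousLinearMap := by
    ext v : 1
    simp
  unfold opNorm
  rw [h]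
  exact ContinuousLinearMap.opNorm_comp_le _ _

lemma opNorm_one : opNorm 1 = 1 := by
  have h : (Matrix.toEuclideanLin (1 : Mat2)).toContinuousLinearMap
      = ContinuousLinearMap.id ℝ _ := by
    ext v : 1
    simp
  unfold opNorm
  rw [h]
  exact ContinuousLinearMap.norm_id

lemma opNorm_nonneg (M : Mat2) : 0 ≤ opNorm M := norm_nonneg _

lemma opNorm_pos (B : SL2) : 0 < opNorm (B : Mat2) := by
  have h : opNorm ((B * B⁻¹ : SL2) : Mat2) = 1 := by
    rw [mul_inv_cancel, Matrix.SpecialLinearGroup.coe_one, opNorm_one]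
  rw [Matrix.SpecialLinearGroup.coe_mul] at h
  have h2 := opNorm_mul_le (B : Mat2) ((B⁻¹ : SL2) : Mat2)
  rw [h] at h2
  rcases (opNorm_nonneg (B : Mat2)).eq_or_lt with h0 | h0
  · rw [← h0] at h2; linarith
  · exact h0

lemma wordProd_append {ι : Type*} (A : ι → SL2) (u v : List ι) :
    wordProd A (u ++ v) = wordProd A u * wordProd A v := by
  simp [wordProd]

lemma opNorm_append_le {ι : Type*} (A : ι → SL2) (u v : List ι) :
    opNorm (wordProd A (u ++ v) : Mat2)
      ≤ opNorm (wordProd A u : Mat2) * opNorm (wordProd A v : Mat2) := by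
  rw [wordProd_append, Matrix.SpecialLinearGroup.coe_mul]
  exact opNorm_mul_le _ _

lemma wordWeight_append {ι : Type*} (p : ι → ℝ) (u v : List ι) :
    wordWeight p (u ++ v) = wordWeight p u * wordWeight p v := by
  simp [wordWeight]

lemma wordWeight_pos {ι : Type*} {p : ι → ℝ} (hp : ∀ i, 0 < p i) (w : List ι) :
    0 < wordWeight p w := by
  apply List.prod_pos
  intro a ha
  obtain ⟨i, -, rfl⟩ := List.mem_map.1 ha
  exact hp i

/-- The potential `p_w^q ‖A_w‖^(2t)` of a word `w`. -/
def pot {ι : Type*} (A : ι → SL2) (p : ι → ℝ) (q t : ℝ) (w : List ι) : ℝ :=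
  (wordWeight p w) ^ q * (opNorm (wordProd A w : Mat2)) ^ (2 * t)

lemma pot_pos {ι : Type*} (A : ι → SL2) {p : ι → ℝ} (hp : ∀ i, 0 < p i) (q t : ℝ)
    (w : List ι) : 0 < pot A p q t w :=
  mul_pos (Real.rpow_pos_of_pos (wordWeight_pos hp w) _)
    (Real.rpow_pos_of_pos (opNorm_pos _) _)

lemma pot_append_le {ι : Type*} (A : ι → SL2) {p : ι → ℝ} (hp : ∀ i, 0 < p i) (q : ℝ)
    {t : ℝ} (ht : 0 < t) (u v : List ι) :
    pot A p q t (u ++ v) ≤ pot A p q t u * pot A p q t v := by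
  unfold pot
  rw [wordWeight_append, Real.mul_rpow (wordWeight_pos hp u).le (wordWeight_pos hp v).le,
    mul_mul_mul_comm, ← Real.mul_rpow (opNorm_nonneg _) (opNorm_nonneg _)]
  refine mul_le_mul_of_nonneg_left ?_ (mul_nonneg
    (Real.rpow_nonneg (wordWeight_pos hp u).le _) (Real.rpow_nonneg (wordWeight_pos hp v).le _))
  exact Real.rpow_le_rpow (opNorm_nonneg _) (opNorm_append_le A u v) (by linarith)

/-! ### Level sums -/

/-- The finite set of words of length `n`. -/
def wordsOf (ι : Type*) [Fintype ι] (n : ℕ) : Finset (List ι) :=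
  Finset.univ.map ⟨fun w : Fin n → ι => List.ofFn w, List.ofFn_injective⟩

lemma mem_wordsOf {ι : Type*} [Fintype ι] {n : ℕ} {w : List ι} :
    w ∈ wordsOf ι n ↔ w.length = n := by
  simp only [wordsOf, Finset.mem_map, Finset.mem_univ, true_and, Function.Embedding.coeFn_mk]
  constructor
  · rintro ⟨a, rfl⟩; simp
  · rintro rfl; exact ⟨w.get, List.ofFn_get w⟩

/-- The level sum `Z_n = Σ_{|w| = n} p_w^q ‖A_w‖^(2t)`. -/
def levelSum {ι : Type*} [Fintype ι] (A : ι → SL2) (p : ι → ℝ) (q t : ℝ) (n : ℕ) : ℝ :=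
  ∑ w ∈ wordsOf ι n, pot A p q t w

lemma psiAvg_eq {ι : Type*} [Fintype ι] (A : ι → SL2) (p : ι → ℝ) (q t : ℝ) (n : ℕ) :
    psiAvg A p q t n = (1 / (n : ℝ)) * Real.logb 2 (levelSum A p q t n) := by
  simp [psiAvg, levelSum, wordsOf, pot]

lemma levelSum_pos {ι : Type*} [Fintype ι] [Nonempty ι] (A : ι → SL2) {p : ι → ℝ}
    (hp : ∀ i, 0 < p i) (q t : ℝ) (n : ℕ) : 0 < levelSum A p q t n := by
  apply Finset.sum_pos (fun w _ => pot_pos A hp q t w)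
  obtain ⟨i⟩ := ‹Nonempty ι›
  exact ⟨List.replicate n i, mem_wordsOf.2 (by simp)⟩

/-- Where the pressure vanishes, the level sums grow and decay subexponentially. -/
lemma levelSum_subexp {ι : Type*} [Fintype ι] (A : ι → SL2) (p : ι → ℝ) (q t : ℝ)
    (h : Tendsto (fun n => psiAvg A p q t n) atTop (𝓝 0)) {ε : ℝ} (hε : 0 < ε) :
    ∃ D : ℝ, 0 ≤ D ∧ ∀ n : ℕ, |Real.logb 2 (levelSum A p q t n)| ≤ D + ε * n := by
  obtain ⟨N, hN⟩ := (Metric.tendsto_atTop.1 h) ε hε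
  refine ⟨∑ k ∈ Finset.range (N + 1), |Real.logb 2 (levelSum A p q t k)|,
    Finset.sum_nonneg fun _ _ => abs_nonneg _, fun n => ?_⟩
  rcases lt_or_ge n (N + 1) with hn | hn
  · have := Finset.single_le_sum (f := fun k => |Real.logb 2 (levelSum A p q t k)|)
      (fun _ _ => abs_nonneg _) (Finset.mem_range.2 hn)
    have h2 : 0 ≤ ε * n := by positivity
    linarith
  · have h1 := hN n (by omega)
    have hn0 : (0 : ℝ) < n := by
      have : 0 < n := by omega
      exact_mod_cast this
    rw [Real.dist_eq, sub_zero, psiAvg_eq, abs_mul, abs_of_pos (by positivity : (0:ℝ) < 1 / n),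
      one_div, inv_mul_lt_iff₀ hn0] at h1
    have h3 : 0 ≤ ∑ k ∈ Finset.range (N + 1), |Real.logb 2 (levelSum A p q t k)| :=
      Finset.sum_nonneg fun _ _ => abs_nonneg _
    nlinarith

/-! ### Stopping words -/

/-- `L = K (m + 1)` is linear in `m`, and every word of length `L` has already crossed the
threshold `2^m`. -/
lemma exists_length_bound {ι : Type*} (A : ι → SL2) (hUH : UniformlyHyperbolic A) :
    ∃ K : ℕ, 1 ≤ K ∧ ∀ (m : ℕ) (w : List ι), w.length = K * (m + 1) →
      (2 : ℝ) ^ m ≤ opNorm (wordProd A w : Mat2) ^ 2 := by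
  obtain ⟨c, hc, r, hr, h⟩ := hUH
  obtain ⟨K, hK⟩ := pow_unbounded_of_one_lt (2 + 1 / c) hr
  have hc' : 0 < 1 / c := by positivity
  have hK1 : 1 ≤ K := by
    by_contra hcon
    have : K = 0 := by omega
    subst this
    simp only [pow_zero] at hK
    linarith
  refine ⟨K, hK1, fun m w hw => ?_⟩
  have hne : w ≠ [] := by
    intro h0
    rw [h0, List.length_nil] at hw
    have : 0 < K * (m + 1) := by positivity
    omega
  have h1 := h w hne
  have hone : (1 : ℝ) ≤ 2 ^ m := one_le_pow₀ (by norm_num)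
  have h2 : (2 : ℝ) ^ m ≤ opNorm (wordProd A w : Mat2) := by
    refine le_trans ?_ h1
    rw [hw, pow_mul, pow_succ]
    have h3 : (2 : ℝ) ^ m ≤ (r ^ K) ^ m := pow_le_pow_left₀ (by norm_num) (by linarith) m
    have h4 : 1 ≤ c * r ^ K := by
      have : c * (1 / c) = 1 := by field_simp
      nlinarith
    nlinarith
  nlinarith

/-- The stopping words of length at most `N`, as a finite set. -/
def stopFin {ι : Type*} [Fintype ι] (A : ι → SL2) (m N : ℕ) : Finset (List ι) := by
  classical
  exact ((Finset.range (N + 1)).biUnion (wordsOf ι)).filter (IsStopping A m)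

lemma mem_stopFin {ι : Type*} [Fintype ι] {A : ι → SL2} {m N : ℕ} {w : List ι} :
    w ∈ stopFin A m N ↔ w.length ≤ N ∧ IsStopping A m w := by
  classical
  simp only [stopFin, Finset.mem_filter, Finset.mem_biUnion, mem_wordsOf, Finset.mem_range]
  constructor
  · rintro ⟨⟨a, ha, hb⟩, h⟩; exact ⟨by omega, h⟩
  · rintro ⟨h1, h⟩; exact ⟨⟨_, by omega, rfl⟩, h⟩

lemma IsStopping.length_le {ι : Type*} {A : ι → SL2} {m L : ℕ} (hL : 1 ≤ L)
    (hA : ∀ w : List ι, w.length = L → (2 : ℝ) ^ m ≤ opNorm (wordProd A w : Mat2) ^ 2)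
    {w : List ι} (hw : IsStopping A m w) : w.length ≤ L := by
  by_contra hcon
  push Not at hcon
  have h1 := hw.2.1 L hL hcon
  have h2 := hA (w.take L) (by simp; omega)
  linarith

lemma exists_stopping_take {ι : Type*} {A : ι → SL2} {m : ℕ} {w : List ι} (hw0 : w ≠ [])
    (hw : (2 : ℝ) ^ m ≤ opNorm (wordProd A w : Mat2) ^ 2) :
    ∃ u, u <+: w ∧ IsStopping A m u := by
  classical
  have hex : ∃ k : ℕ, 1 ≤ k ∧ (2 : ℝ) ^ m ≤ opNorm (wordProd A (w.take k) : Mat2) ^ 2 :=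
    ⟨w.length, List.length_pos_iff.2 hw0, by rwa [List.take_length]⟩
  obtain ⟨h1, h2⟩ := Nat.find_spec hex
  have hmin := fun j hj => Nat.find_min (m := j) hex hj
  set k := Nat.find hex
  refine ⟨w.take k, ⟨w.drop k, List.take_append_drop k w⟩, ?_, ?_, h2⟩
  · intro h0
    rcases List.take_eq_nil_iff.1 h0 with h0 | h0
    · omega
    · exact hw0 h0
  · intro j hj1 hj2
    have hjk : j < k := lt_of_lt_of_le hj2 (by simp)
    rw [List.take_take, min_eq_left hjk.le]
    by_contra hcon
    exact hmin j hjk ⟨hj1, not_lt.1 hcon⟩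

lemma stopSum_eq {ι : Type*} [Fintype ι] {A : ι → SL2} (p : ι → ℝ) (q : ℝ) {m L : ℕ}
    (hL : ∀ w : List ι, IsStopping A m w → w.length ≤ L) :
    stopSum A p q m = ∑ w ∈ stopFin A m L, (wordWeight p w) ^ q := by
  unfold stopSum
  rw [tsum_eq_sum (s := stopFin A m L)]
  · refine Finset.sum_congr rfl fun w hw => ?_
    exact Set.indicator_of_mem (s := {w : List ι | IsStopping A m w}) (mem_stopFin.1 hw).2 _
  · intro w hw
    refine Set.indicator_of_notMem (fun h => hw ?_) _
    exact mem_stopFin.2 ⟨hL w h, h⟩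

/-- A stopping word overshoots the threshold by at most one letter. -/
lemma IsStopping.norm_sq_le {ι : Type*} {A : ι → SL2} {m : ℕ} {M : ℝ}
    (hM : ∀ i, opNorm (A i : Mat2) ≤ M) {w : List ι} (hw : IsStopping A m w) :
    opNorm (wordProd A w : Mat2) ^ 2 ≤ M ^ 2 * 2 ^ m := by
  obtain ⟨h0, h1, -⟩ := hw
  obtain ⟨u, i, rfl⟩ := List.eq_nil_or_concat' w |>.resolve_left h0
  have hu : opNorm (wordProd A u : Mat2) ^ 2 ≤ 2 ^ m := by
    rcases eq_or_ne u [] with rfl | hne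
    · simp only [wordProd, List.map_nil, List.prod_nil, Matrix.SpecialLinearGroup.coe_one,
        opNorm_one, one_pow]
      exact one_le_pow₀ (by norm_num)
    · have := h1 u.length (List.length_pos_iff.2 hne) (by simp)
      rw [List.take_left'] at this
      · exact this.le
      · rfl
  have hi : opNorm (wordProd A [i] : Mat2) ≤ M := by simpa [wordProd] using hM i
  calc opNorm (wordProd A (u ++ [i]) : Mat2) ^ 2
      ≤ (opNorm (wordProd A u : Mat2) * opNorm (wordProd A [i] : Mat2)) ^ 2 :=
        pow_le_pow_left₀ (opNorm_nonneg _) (opNorm_append_le A u [i]) 2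
    _ = opNorm (wordProd A [i] : Mat2) ^ 2 * opNorm (wordProd A u : Mat2) ^ 2 := by ring
    _ ≤ M ^ 2 * 2 ^ m := by
        gcongr
        exact opNorm_nonneg _

/-- On stopping words `‖A_w‖^(2t)` is comparable to `2^(mt)`. -/
lemma stopSum_two_sided {ι : Type*} [Fintype ι] {A : ι → SL2} {p : ι → ℝ}
    (hp : ∀ i, 0 < p i) (q : ℝ) {t : ℝ} (ht : 0 < t) {m L : ℕ} {M : ℝ}
    (hM : ∀ i, opNorm (A i : Mat2) ≤ M) :
    ((2 : ℝ) ^ m) ^ t * ∑ w ∈ stopFin A m L, (wordWeight p w) ^ q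
        ≤ ∑ w ∈ stopFin A m L, pot A p q t w ∧
      ∑ w ∈ stopFin A m L, pot A p q t w
        ≤ (M ^ 2 * 2 ^ m) ^ t * ∑ w ∈ stopFin A m L, (wordWeight p w) ^ q := by
  have key : ∀ w : List ι, pot A p q t w
      = (opNorm (wordProd A w : Mat2) ^ 2) ^ t * (wordWeight p w) ^ q := by
    intro w
    rw [pot, Real.rpow_mul (opNorm_nonneg _), mul_comm, Real.rpow_two]
  simp only [Finset.mul_sum]
  constructor
  · refine Finset.sum_le_sum fun w hw => ?_
    rw [key]
    refine mul_le_mul_of_nonneg_right ?_ (Real.rpow_nonneg (wordWeight_pos hp w).le _)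
    exact Real.rpow_le_rpow (by positivity) (mem_stopFin.1 hw).2.2.2 ht.le
  · refine Finset.sum_le_sum fun w hw => ?_
    rw [key]
    refine mul_le_mul_of_nonneg_right ?_ (Real.rpow_nonneg (wordWeight_pos hp w).le _)
    exact Real.rpow_le_rpow (by positivity) ((mem_stopFin.1 hw).2.norm_sq_le hM) ht.le

/-! ### Comparing the stopping sum with the level sums -/

lemma stopSumF_le {ι : Type*} [Fintype ι] (A : ι → SL2) {p : ι → ℝ}
    (hp : ∀ i, 0 < p i) (q t : ℝ) (m L : ℕ) :
    ∑ w ∈ stopFin A m L, pot A p q t w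
      ≤ ∑ n ∈ Finset.range (L + 1), levelSum A p q t n := by
  classical
  calc ∑ w ∈ stopFin A m L, pot A p q t w
      ≤ ∑ w ∈ (Finset.range (L + 1)).biUnion (wordsOf ι), pot A p q t w := by
        refine Finset.sum_le_sum_of_subset_of_nonneg ?_ fun w _ _ => (pot_pos A hp q t w).le
        unfold stopFin
        exact Finset.filter_subset _ _
    _ = _ := by
        rw [Finset.sum_biUnion]
        · rfl
        · intro a _ b _ hab
          refine Finset.disjoint_left.2 fun w ha hb => hab ?_
          rw [← mem_wordsOf.1 ha, ← mem_wordsOf.1 hb]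

/-- Splitting each word of length `L` at a stopping prefix. -/
lemma levelSum_le_stopSumF {ι : Type*} [Fintype ι] {A : ι → SL2} {p : ι → ℝ}
    (hp : ∀ i, 0 < p i) (q : ℝ) {t : ℝ} (ht : 0 < t) {m L : ℕ} (hL : 1 ≤ L)
    (hA : ∀ w : List ι, w.length = L → (2 : ℝ) ^ m ≤ opNorm (wordProd A w : Mat2) ^ 2)
    {B : ℝ} (hB : ∀ n ≤ L, levelSum A p q t n ≤ B) :
    levelSum A p q t L ≤ (∑ w ∈ stopFin A m L, pot A p q t w) * B := by
  classical
  have hterm : ∀ u v : List ι, 0 ≤ pot A p q t u * pot A p q t v := fun u v =>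
    mul_nonneg (pot_pos A hp q t u).le (pot_pos A hp q t v).le
  calc levelSum A p q t L
      ≤ ∑ w ∈ wordsOf ι L, ∑ u ∈ stopFin A m L,
          if u <+: w then pot A p q t u * pot A p q t (w.drop u.length) else 0 := by
        refine Finset.sum_le_sum fun w hw => ?_
        have hwL := mem_wordsOf.1 hw
        obtain ⟨u, ⟨v, rfl⟩, hu⟩ := exists_stopping_take (A := A) (m := m) (w := w)
          (by rintro rfl; simp at hwL; omega) (hA w hwL)
        have hmem : u ∈ stopFin A m L := mem_stopFin.2 ⟨by simp at hwL; omega, hu⟩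
        refine le_trans ?_ (Finset.single_le_sum (fun u _ => ?_) hmem)
        · rw [if_pos (List.prefix_append u v), List.drop_left]
          exact pot_append_le A hp q ht u v
        · split_ifs
          · exact hterm _ _
          · exact le_rfl
    _ = ∑ u ∈ stopFin A m L, ∑ w ∈ wordsOf ι L,
          if u <+: w then pot A p q t u * pot A p q t (w.drop u.length) else 0 :=
        Finset.sum_comm
    _ ≤ ∑ u ∈ stopFin A m L, pot A p q t u * B := by
        refine Finset.sum_le_sum fun u hu => ?_
        have huL := (mem_stopFin.1 hu).1
        have hset : (wordsOf ι L).filter (fun w => u <+: w)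
            = (wordsOf ι (L - u.length)).map ⟨fun v => u ++ v, List.append_right_injective u⟩ := by
          ext w
          simp only [Finset.mem_filter, mem_wordsOf, Finset.mem_map, Function.Embedding.coeFn_mk]
          constructor
          · rintro ⟨h1, v, rfl⟩
            exact ⟨v, by simp at h1; omega, rfl⟩
          · rintro ⟨v, h1, rfl⟩
            exact ⟨by simp; omega, List.prefix_append u v⟩
        rw [← Finset.sum_filter, hset, Finset.sum_map]
        simp only [Function.Embedding.coeFn_mk, List.drop_left]
        rw [← Finset.mul_sum]
        exact mul_le_mul_of_nonneg_left (hB _ (Nat.sub_le _ _)) (pot_pos A hp q t u).le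
    _ = _ := by rw [Finset.sum_mul]

/-! ### Asymptotics -/

/-- A linear factor is absorbed by an arbitrarily slow exponential. -/
lemma exists_linear_le_rpow {ε : ℝ} (hε : 0 < ε) :
    ∃ E : ℝ, ∀ n : ℕ, Real.logb 2 (n + 1) ≤ E + ε * n := by
  set x := (2 : ℝ) ^ ε - 1 with hx
  have hx0 : 0 < x := by
    have := Real.one_lt_rpow (by norm_num : (1:ℝ) < 2) hε
    linarith
  refine ⟨Real.logb 2 (1 + 1 / x), fun n => ?_⟩
  have h1 : 1 + (n : ℝ) * x ≤ (1 + x) ^ n := one_add_mul_le_pow (by linarith) n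
  have h2 : (1 + x) ^ n = (2 : ℝ) ^ (ε * n) := by
    rw [hx, add_sub_cancel, Real.rpow_mul (by norm_num), Real.rpow_natCast]
  have h3 : (n : ℝ) + 1 ≤ (1 + 1 / x) * 2 ^ (ε * n) := by
    rw [← h2]
    refine le_trans ?_ (mul_le_mul_of_nonneg_left h1 (by positivity))
    have h4 : (1 + 1 / x) * (1 + n * x) = n + 1 + (1 / x + n * x) := by
      field_simp
      ring
    rw [h4]
    have : 0 ≤ 1 / x + n * x := by positivity
    linarith
  calc Real.logb 2 (n + 1) ≤ Real.logb 2 ((1 + 1 / x) * 2 ^ (ε * n)) :=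
        Real.logb_le_logb_of_le (by norm_num) (by positivity) h3
    _ = Real.logb 2 (1 + 1 / x) + ε * n := by
        rw [Real.logb_mul (by positivity) (by positivity),
          Real.logb_rpow (by norm_num) (by norm_num)]

/-- The stopping sum is `2^(-mt)` up to a subexponential factor. -/
lemma logb_stopSum {ι : Type*} [Fintype ι] [Nonempty ι] (A : ι → SL2)
    (hUH : UniformlyHyperbolic A) {p : ι → ℝ} (hp : ∀ i, 0 < p i) (q : ℝ) {t : ℝ} (ht : 0 < t)
    (h : Tendsto (fun n => psiAvg A p q t n) atTop (𝓝 0)) {δ : ℝ} (hδ : 0 < δ) :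
    ∃ D : ℝ, ∀ m : ℕ, |Real.logb 2 (stopSum A p q m) + m * t| ≤ D + δ * m := by
  obtain ⟨K, hK, hKA⟩ := exists_length_bound A hUH
  have hK0 : (0 : ℝ) < K := by exact_mod_cast hK
  -- Both bounds lose at most `2 ε L`, up to constants, with `L = K (m + 1)`.
  obtain ⟨ε, hε, hεK⟩ : ∃ ε : ℝ, 0 < ε ∧ 2 * ε * K = δ :=
    ⟨δ / (2 * K), by positivity, by field_simp⟩
  obtain ⟨D, hD0, hD⟩ := levelSum_subexp A p q t h hε
  obtain ⟨E, hE⟩ := exists_linear_le_rpow hε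
  obtain ⟨M, hM1, hM⟩ : ∃ M : ℝ, 1 ≤ M ∧ ∀ i, opNorm (A i : Mat2) ≤ M := by
    refine ⟨1 + ∑ i, opNorm (A i : Mat2), ?_, fun i => ?_⟩
    · have : 0 ≤ ∑ i, opNorm (A i : Mat2) := Finset.sum_nonneg fun _ _ => opNorm_nonneg _
      linarith
    · have := Finset.single_le_sum (f := fun i => opNorm (A i : Mat2))
        (fun _ _ => opNorm_nonneg _) (Finset.mem_univ i)
      linarith
  set C := Real.logb 2 ((M ^ 2) ^ t) with hC
  have hC0 : 0 ≤ C := by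
    refine Real.logb_nonneg (by norm_num) (Real.one_le_rpow ?_ ht.le)
    exact one_le_pow₀ hM1
  refine ⟨C + 2 * D + |E| + δ, fun m => ?_⟩
  set L := K * (m + 1) with hLdef
  have hL1 : 1 ≤ L := Nat.mul_pos hK (Nat.succ_pos m)
  have hεL : 2 * (ε * L) = δ * m + δ := by
    rw [hLdef]; push_cast; rw [← hεK]; ring
  have hA := hKA m
  rw [← hLdef] at hA
  have hZ := fun n => levelSum_pos A hp q t n
  have hub : ∀ n ≤ L, levelSum A p q t n ≤ 2 ^ (D + ε * L) := by
    intro n hn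
    rw [← Real.logb_le_iff_le_rpow (by norm_num) (hZ n)]
    have h1 := (abs_le.1 (hD n)).2
    have : ε * n ≤ ε * L := by gcongr
    linarith
  rw [stopSum_eq p q (fun w hw => hw.length_le hL1 hA)]
  set S := ∑ w ∈ stopFin A m L, (wordWeight p w) ^ q
  obtain ⟨hF1, hF2⟩ := stopSum_two_sided (A := A) (m := m) (L := L) hp q ht hM
  have hF3 := stopSumF_le A hp q t m L
  have hF4 := levelSum_le_stopSumF hp q ht hL1 hA hub
  set F := ∑ w ∈ stopFin A m L, pot A p q t w
  have hFpos : 0 < F := pos_of_mul_pos_left ((hZ L).trans_le hF4) (by positivity)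
  have hSpos : 0 < S := pos_of_mul_pos_right (hFpos.trans_le hF2) (by positivity)
  have hpow : Real.logb 2 (((2 : ℝ) ^ m) ^ t) = m * t := by
    rw [← Real.rpow_natCast, ← Real.rpow_mul (by norm_num),
      Real.logb_rpow (by norm_num) (by norm_num)]
  have g1 : m * t + Real.logb 2 S ≤ Real.logb 2 F := by
    rw [← hpow, ← Real.logb_mul (by positivity) hSpos.ne']
    exact Real.logb_le_logb_of_le (by norm_num) (by positivity) hF1
  have g2 : Real.logb 2 F ≤ C + m * t + Real.logb 2 S := by
    rw [← hpow, hC, ← Real.logb_mul (by positivity) (by positivity),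
      ← Real.logb_mul (by positivity) hSpos.ne', ← Real.mul_rpow (by positivity) (by positivity)]
    exact Real.logb_le_logb_of_le (by norm_num) hFpos hF2
  have g3 : Real.logb 2 F ≤ Real.logb 2 (L + 1) + (D + ε * L) := by
    have : F ≤ ((L : ℝ) + 1) * 2 ^ (D + ε * L) := by
      refine hF3.trans ?_
      refine (Finset.sum_le_card_nsmul _ _ _ fun n hn =>
        hub n (Nat.lt_succ_iff.1 (Finset.mem_range.1 hn))).trans ?_
      simp
    have h2 := Real.logb_le_logb_of_le (by norm_num : (1:ℝ) < 2) hFpos this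
    rwa [Real.logb_mul (by positivity) (by positivity),
      Real.logb_rpow (by norm_num) (by norm_num)] at h2
  have g4 : Real.logb 2 (levelSum A p q t L) ≤ Real.logb 2 F + (D + ε * L) := by
    have h2 := Real.logb_le_logb_of_le (by norm_num : (1:ℝ) < 2) (hZ L) hF4
    rwa [Real.logb_mul hFpos.ne' (by positivity),
      Real.logb_rpow (by norm_num) (by norm_num)] at h2
  have g5 := (abs_le.1 (hD L)).1
  have g6 := hE L
  have g7 := le_abs_self E
  have g8 := abs_nonneg E
  rw [abs_le]
  constructor <;> linarith

lemma tendsto_stopSum {ι : Type*} [Fintype ι] [Nonempty ι] (A : ι → SL2)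
    (hUH : UniformlyHyperbolic A) {p : ι → ℝ} (hp : ∀ i, 0 < p i) (q : ℝ) {t : ℝ} (ht : 0 < t)
    (h : Tendsto (fun n => psiAvg A p q t n) atTop (𝓝 0)) :
    Tendsto (fun m : ℕ => -(1 / (m : ℝ)) * Real.logb 2 (stopSum A p q m)) atTop (𝓝 t) := by
  rw [Metric.tendsto_atTop]
  intro δ hδ
  obtain ⟨D, hD⟩ := logb_stopSum A hUH hp q ht h (half_pos hδ)
  obtain ⟨N, hN⟩ := exists_nat_gt (2 * D / δ)
  refine ⟨N + 1, fun m hm => ?_⟩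
  have hm0 : (0 : ℝ) < m := by
    have : 0 < m := by omega
    exact_mod_cast this
  have hNm : (N : ℝ) ≤ m := by exact_mod_cast (by omega : N ≤ m)
  have hDm : 2 * D < m * δ := (div_lt_iff₀ hδ).1 (hN.trans_le hNm)
  have heq : -(1 / (m : ℝ)) * Real.logb 2 (stopSum A p q m) - t
      = -((Real.logb 2 (stopSum A p q m) + m * t) / m) := by
    field_simp
    ring
  rw [Real.dist_eq, heq, abs_neg, abs_div, abs_of_pos hm0, div_lt_iff₀ hm0]
  have := hD m
  linarith

/-- the stopping-word description of τ̃(q). -/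
theorem statement10 {ι : Type} [Fintype ι] (hcard : 2 ≤ Fintype.card ι)
    (A : ι → SL2) (hUH : UniformlyHyperbolic A)
    (p : ι → ℝ) (hp : ∀ i, 0 < p i) (hp1 : ∑ i : ι, p i = 1)
    (tτ : ℝ → ℝ) (htτ : ∀ q : ℝ, 1 < q → IsPressureZero A p q (tτ q)) :
    ∀ q : ℝ, 1 < q →
      Filter.liminf (fun m : ℕ => -(1 / (m : ℝ)) * Real.logb 2 (stopSum A p q m))
        Filter.atTop = tτ q := by
  intro q hq
  have : Nonempty ι := Fintype.card_pos_iff.1 (by omega)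
  obtain ⟨ht, hlim, -⟩ := htτ q hq
  exact (tendsto_stopSum A hUH hp q ht hlim).liminf_eq

end

end Paper
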